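/- Under the 2-group SBM with observation errors, suppose q ∈ (0,1) and β ∈ (0,1). Write β_{11} = β − γ_1/√n, β_{22} = β − γ_2/√n, q* = (1 − β)q, and p*_g = (1 − β + γ_g/√n)(q + μ_g/√n) for g = 1,2. Then the vector n·(û_{1,1} − p*_1, û_{2,1} − β_{11}p*_1, û_{1,2} − p*_2, û_{2,2} − β_{22}p*_2, û_{1,b} − q*, û_{2,b} − βq*) converges in distribution to a centered 6-dimensional Gaussian with block-diagonal covariance diag(a_κ^{−1}Σ_u, b_κ^{−1}Σ_u, c_κ^{−1}Σ_u), where a_κ = κ²/2, b_κ = (1−κ)²/2, c_κ = κ(1−κ), and Σ_u is the 2×2 matrix with entries Σ_u[1,1] = q*(1−q*), Σ_u[1,2] = Σ_u[2,1] = (1/2 − q*)βq*, Σ_u[2,2] = (1/2 − βq*)βq*. Moreover, Σ_u is strictly positive definite, and consequently (û_{1,1}, û_{2,1}, û_{1,2}, û_{2,2}, û_{1,b}, û_{2,b}) converges in probability to (q*, βq*, q*, βq*, q*, βq*). -/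

import Mathlib

/-!
STATEMENT 11: Joint asymptotic normality of the localized empirical moments
under the 2-group SBM with observation errors.  Convergence in distribution to
the centered 6-dimensional Gaussian with block-diagonal covariance
diag(a_κ⁻¹Σ_u, b_κ⁻¹Σ_u, c_κ⁻¹Σ_u) is expressed by the Cramér–Wold device:
every nonzero linear combination converges in distribution (pointwise in the
CDF) to the corresponding one-dimensional centred Gaussian.  The statement
also asserts that Σ_u is strictly positive definite, and the consistency of
the six empirical moments.  The model hypothesis holds for all large n (so
that all the n-dependent parameters are genuine probabilities).
-/

open MeasureTheory ProbabilityTheory Filter Finset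

noncomputable section

/-- Mass of a label configuration: i.i.d. labels, `true` (minority) w.p. κ. -/
def labelMass (κ : ℝ) {n : ℕ} (l : Fin n → Bool) : ℝ :=
  ∏ i, (if l i then κ else 1 - κ)

/-- Conditional mass of an adjacency configuration given labels:
independent Bernoulli edges with success probability `B (l i) (l j)`, i < j. -/
def edgeMass {n : ℕ} (B : Bool → Bool → ℝ) (l : Fin n → Bool)
    (a : Fin n → Fin n → Bool) : ℝ :=
  ∏ p ∈ Finset.univ.filter (fun p : Fin n × Fin n => p.1 < p.2),
    (if a p.1 p.2 then B (l p.1) (l p.2) else 1 - B (l p.1) (l p.2))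

/-- Conditional mass of an observed network `y` given the construct network
`a` and the labels: each present edge of `a` is kept independently with
probability `1 − βm (l i) (l j)` (type II error rate `βm`), and no edges are
added. -/
def obsMass {n : ℕ} (βm : Bool → Bool → ℝ) (l : Fin n → Bool)
    (a y : Fin n → Fin n → Bool) : ℝ :=
  ∏ p ∈ Finset.univ.filter (fun p : Fin n × Fin n => p.1 < p.2),
    (if a p.1 p.2 then
      (if y p.1 p.2 then 1 - βm (l p.1) (l p.2) else βm (l p.1) (l p.2))
     else (if y p.1 p.2 then 0 else 1))

/-- The symmetric 2×2 matrix with within-group values `x₁` (group 1 = `true`),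
`x₂` (group 2 = `false`) and between-group value `xb`. -/
def sbmB (x₁ x₂ xb : ℝ) : Bool → Bool → ℝ :=
  fun x y => if x then (if y then x₁ else xb) else (if y then xb else x₂)

/-- `(P, c, A, Y, Y')` is a 2-group SBM with connectivity matrix `B` and two
conditionally independent noisy replicates `Y`, `Y'` with group-dependent
type II error rates `βm`.  The joint law is specified by its probability
mass function. -/
structure IsObsSBM {Ω : Type*} [MeasurableSpace Ω] (P : Measure Ω) (n : ℕ)
    (B βm : Bool → Bool → ℝ) (κ : ℝ)
    (c : Ω → Fin n → Bool) (A Y Y' : Ω → Fin n → Fin n → Bool) : Prop where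
  isProb : IsProbabilityMeasure P
  symmA : ∀ ω i j, A ω i j = A ω j i
  looplessA : ∀ ω i, A ω i i = false
  symmY : ∀ ω i j, Y ω i j = Y ω j i
  looplessY : ∀ ω i, Y ω i i = false
  symmY' : ∀ ω i j, Y' ω i j = Y' ω j i
  looplessY' : ∀ ω i, Y' ω i i = false
  law : ∀ (l : Fin n → Bool) (a y y' : Fin n → Fin n → Bool),
    (∀ i j, a i j = a j i) → (∀ i, a i i = false) →
    (∀ i j, y i j = y j i) → (∀ i, y i i = false) →
    (∀ i j, y' i j = y' j i) → (∀ i, y' i i = false) →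
    P {ω | c ω = l ∧ A ω = a ∧ Y ω = y ∧ Y' ω = y'}
      = ENNReal.ofReal (labelMass κ l * edgeMass B l a *
          obsMass βm l a y * obsMass βm l a y')

/-- Number of unordered pairs `i < j` selected by `sel`. -/
def pairCard {n : ℕ} (sel : Fin n → Fin n → Bool) : ℝ :=
  ((Finset.univ.filter
      (fun p : Fin n × Fin n => p.1 < p.2 ∧ sel p.1 p.2 = true)).card : ℝ)

/-- Pairs within group 1. -/
def within1 {n : ℕ} (c : Fin n → Bool) : Fin n → Fin n → Bool :=
  fun i j => c i && c j

/-- Pairs within group 2. -/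
def within2 {n : ℕ} (c : Fin n → Bool) : Fin n → Fin n → Bool :=
  fun i j => !(c i) && !(c j)

/-- Between-group pairs. -/
def between {n : ℕ} (c : Fin n → Bool) : Fin n → Fin n → Bool :=
  fun i j => c i != c j

/-- `û₁`: observed edge density over the pairs selected by `cls`. -/
def u1hat {n : ℕ} (cls y : Fin n → Fin n → Bool) : ℝ :=
  pairCard (fun i j => cls i j && y i j) / pairCard cls

/-- `û₂`: half the disagreement rate of the two replicates over the pairs
selected by `cls`. -/
def u2hat {n : ℕ} (cls y y' : Fin n → Fin n → Bool) : ℝ :=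
  pairCard (fun i j => cls i j && (y i j != y' i j)) / (2 * pairCard cls)

/-- Estimator of the type II error rate over the pairs selected by `cls`. -/
def betaHat {n : ℕ} (cls y y' : Fin n → Fin n → Bool) : ℝ :=
  u2hat cls y y' / u1hat cls y

/-- `γ̂₁ = √n (β̂_b − β̂₁)`. -/
def gammaHat1 {n : ℕ} (c : Fin n → Bool) (y y' : Fin n → Fin n → Bool) : ℝ :=
  Real.sqrt n * (betaHat (between c) y y' - betaHat (within1 c) y y')

/-- `γ̂₂ = √n (β̂_b − β̂₂)`. -/
def gammaHat2 {n : ℕ} (c : Fin n → Bool) (y y' : Fin n → Fin n → Bool) : ℝ :=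
  Real.sqrt n * (betaHat (between c) y y' - betaHat (within2 c) y y')

/-- `μ̂₁ = √n (û₁,₁/(1−β̂₁) − û₁,b/(1−β̂_b))`. -/
def muHat1 {n : ℕ} (c : Fin n → Bool) (y y' : Fin n → Fin n → Bool) : ℝ :=
  Real.sqrt n * (u1hat (within1 c) y / (1 - betaHat (within1 c) y y')
    - u1hat (between c) y / (1 - betaHat (between c) y y'))

/-- `μ̂₂ = √n (û₁,₂/(1−β̂₂) − û₁,b/(1−β̂_b))`. -/
def muHat2 {n : ℕ} (c : Fin n → Bool) (y y' : Fin n → Fin n → Bool) : ℝ :=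
  Real.sqrt n * (u1hat (within2 c) y / (1 - betaHat (within2 c) y y')
    - u1hat (between c) y / (1 - betaHat (between c) y y'))

/-- The centered vector of the six localized empirical moments, scaled by n. -/
def obsVec {n : ℕ} (q β μ₁ μ₂ γ₁ γ₂ : ℝ) (c : Fin n → Bool)
    (y y' : Fin n → Fin n → Bool) : Fin 6 → ℝ :=
  ![ (n : ℝ) * (u1hat (within1 c) y
        - (1 - β + γ₁ / Real.sqrt n) * (q + μ₁ / Real.sqrt n)),
     (n : ℝ) * (u2hat (within1 c) y y'
        - (β - γ₁ / Real.sqrt n) *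
          ((1 - β + γ₁ / Real.sqrt n) * (q + μ₁ / Real.sqrt n))),
     (n : ℝ) * (u1hat (within2 c) y
        - (1 - β + γ₂ / Real.sqrt n) * (q + μ₂ / Real.sqrt n)),
     (n : ℝ) * (u2hat (within2 c) y y'
        - (β - γ₂ / Real.sqrt n) *
          ((1 - β + γ₂ / Real.sqrt n) * (q + μ₂ / Real.sqrt n))),
     (n : ℝ) * (u1hat (between c) y - (1 - β) * q),
     (n : ℝ) * (u2hat (between c) y y' - β * ((1 - β) * q)) ]

/-- The 2×2 matrix Σ_u (with `qs = q* = (1−β)q`). -/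
def SigmaU (qs β : ℝ) : Matrix (Fin 2) (Fin 2) ℝ :=
  !![qs * (1 - qs),            (1 / 2 - qs) * β * qs;
     (1 / 2 - qs) * β * qs,    (1 / 2 - β * qs) * β * qs]

/-- Entries of Σ_u indexed by `ℕ` (for assembling the 6×6 covariance). -/
def SigmaUfun (qs β : ℝ) : ℕ → ℕ → ℝ := fun i j =>
  if i = 0 then (if j = 0 then qs * (1 - qs) else (1 / 2 - qs) * β * qs)
  else (if j = 0 then (1 / 2 - qs) * β * qs else (1 / 2 - β * qs) * β * qs)

/-- Block scaling constants a_κ = κ²/2, b_κ = (1−κ)²/2, c_κ = κ(1−κ). -/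
def blockScale (κ : ℝ) : ℕ → ℝ := fun b =>
  if b = 0 then κ ^ 2 / 2 else if b = 1 then (1 - κ) ^ 2 / 2 else κ * (1 - κ)

/-- The block-diagonal 6×6 covariance diag(a_κ⁻¹Σ_u, b_κ⁻¹Σ_u, c_κ⁻¹Σ_u). -/
def Sigma6 (κ qs β : ℝ) : Fin 6 → Fin 6 → ℝ := fun k k' =>
  if (k : ℕ) / 2 = (k' : ℕ) / 2 then
    (blockScale κ ((k : ℕ) / 2))⁻¹ * SigmaUfun qs β ((k : ℕ) % 2) ((k' : ℕ) % 2)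
  else 0

/-- Quadratic form of a 6×6 matrix. -/
def quadForm6 (M : Fin 6 → Fin 6 → ℝ) (t : Fin 6 → ℝ) : ℝ :=
  ∑ k, ∑ k', t k * M k k' * t k'

/-!
Each of `û₁`, `û₂` is an average over the pairs of a block of a function of the triple
`(A i j, Y i j, Y' i j)`, and conditionally on the labels these triples are independent over the
pairs, with a law depending only on the block. So the conditional characteristic function of a
linear combination of the scaled moments is a product over the three blocks of `N`-th powers of the
characteristic function of one centred bounded variable, `N` being the number of pairs of the
block, and a second-order expansion gives the Gaussian limit as soon as `N / n²` converges. The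
latter holds in probability by Chebyshev's inequality for the label frequencies, and as
characteristic functions are bounded by `1`, averaging over the labels preserves the limit; Lévy's
continuity theorem concludes. Consistency follows because convergent laws are tight while the
scaling `n` tends to infinity.
-/

section Asymptotics

open Topology Asymptotics

variable {ι : Type*} {l : Filter ι} {u : ι → ℂ}

lemma tendsto_mul_comp_zero_of_isBigO_pow_succ {a : ι → ℂ} {f : ℂ → ℂ} {k : ℕ} {z : ℂ}
    (hf : f =O[𝓝 0] fun w => w ^ (k + 1)) (hu : Tendsto u l (𝓝 0))
    (hau : Tendsto (fun i => a i * u i ^ k) l (𝓝 z)) :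
    Tendsto (fun i => a i * f (u i)) l (𝓝 0) := by
  have hbound : (fun i => a i * f (u i)) =O[l] fun i => a i * u i ^ k * u i := by
    simpa only [Function.comp_def, pow_succ, mul_assoc] using
      (isBigO_refl a l).mul (hf.comp_tendsto hu)
  refine hbound.trans_tendsto ?_
  simpa only [mul_zero] using hau.mul hu

lemma tendsto_zero_of_natCast_mul {𝕜 : Type*} [RCLike 𝕜] {N : ι → ℕ} {v : ι → 𝕜} {z : 𝕜}
    (hN : Tendsto N l atTop) (hv : Tendsto (fun i => N i * v i) l (𝓝 z)) :
    Tendsto v l (𝓝 0) :=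
  tendsto_zero_of_isBoundedUnder_smul_of_tendsto_cobounded (K := 𝕜) hv.norm.isBoundedUnder_le
    (tendsto_natCast_atTop_cobounded.comp hN)

lemma tendsto_one_add_pow_exp {N : ι → ℕ} {z : ℂ} (hN : Tendsto N l atTop)
    (hu : Tendsto (fun i => N i * u i) l (𝓝 z)) :
    Tendsto (fun i => (1 + u i) ^ N i) l (𝓝 (Complex.exp z)) := by
  have hu_zero := tendsto_zero_of_natCast_mul hN hu
  have hlog : Tendsto (fun i => N i * Complex.log (1 + u i)) l (𝓝 z) := by
    have hrem := tendsto_mul_comp_zero_of_isBigO_pow_succ (k := 1)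
      Complex.log_sub_self_isBigO hu_zero (by simpa only [pow_one] using hu)
    refine (zero_add z ▸ hrem.add hu).congr fun i => by ring
  refine ((Complex.continuous_exp.tendsto z).comp hlog).congr' ?_
  filter_upwards [hu_zero.eventually_ne (show (0 : ℂ) ≠ -1 by simp)] with i hi
  have hne : 1 + u i ≠ 0 := fun h => hi (eq_neg_of_add_eq_zero_right h)
  rw [Function.comp_apply, Complex.exp_nat_mul, Complex.exp_log hne]

lemma tendsto_mul_exp_sub_one_sub_self {a : ι → ℂ} {z : ℂ} (hu : Tendsto u l (𝓝 0))
    (hau : Tendsto (fun i => a i * u i ^ 2) l (𝓝 z)) :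
    Tendsto (fun i => a i * (Complex.exp (u i) - 1 - u i)) l (𝓝 (z / 2)) := by
  have hexp : (fun w : ℂ => Complex.exp w - (1 + w + w ^ 2 / 2)) =O[𝓝 0] fun w => w ^ (2 + 1) := by
    simpa [Finset.sum_range_succ] using Complex.exp_sub_sum_range_isBigO_pow 3
  have hrem := tendsto_mul_comp_zero_of_isBigO_pow_succ hexp hu hau
  refine (zero_add (z / 2) ▸ hrem.add (hau.div_const 2)).congr fun i => by ring

/-- Characteristic function at `θ` of a variable taking the value `d x` with probability `w x`. -/
def weightedCharFun {X : Type*} [Fintype X] (w d : X → ℝ) (θ : ℝ) : ℂ :=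
  ∑ x, w x * Complex.exp ((θ * d x : ℝ) * Complex.I)

lemma weightedCharFun_sub_one {X : Type*} [Fintype X] {w d : X → ℝ} (hw : ∑ x, w x = 1)
    (hwd : ∑ x, w x * d x = 0) (θ : ℝ) :
    weightedCharFun w d θ - 1 = ∑ x, w x *
      (Complex.exp ((θ * d x : ℝ) * Complex.I) - 1 - (θ * d x : ℝ) * Complex.I) := by
  have hone : ∑ x, (w x : ℂ) = 1 := mod_cast hw
  have hlin : ∑ x, (w x : ℂ) * ((θ * d x : ℝ) * Complex.I) = 0 := by
    calc ∑ x, (w x : ℂ) * ((θ * d x : ℝ) * Complex.I)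
        = θ * Complex.I * (∑ x, w x * d x : ℝ) := by
          push_cast
          rw [Finset.mul_sum]
          exact Finset.sum_congr rfl fun x _ => by ring
      _ = 0 := by rw [hwd, Complex.ofReal_zero, mul_zero]
  simp only [weightedCharFun, mul_sub, mul_one, Finset.sum_sub_distrib, hone, hlin, sub_zero]

theorem tendsto_weightedCharFun_pow {X : Type*} [Fintype X] {w d : ι → X → ℝ} {w₀ d₀ : X → ℝ}
    {N : ι → ℕ} {θ : ι → ℝ} {r : ℝ} (hw : Tendsto w l (𝓝 w₀)) (hd : Tendsto d l (𝓝 d₀))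
    (hw_sum : ∀ i, ∑ x, w i x = 1) (hwd_sum : ∀ i, ∑ x, w i x * d i x = 0)
    (hN : Tendsto N l atTop) (hNθ : Tendsto (fun i => N i * θ i ^ 2) l (𝓝 r)) :
    Tendsto (fun i => weightedCharFun (w i) (d i) (θ i) ^ N i) l
      (𝓝 (Complex.exp (-(r * ∑ x, w₀ x * d₀ x ^ 2) / 2 : ℝ))) := by
  have hθ : Tendsto θ l (𝓝 0) := by
    rw [tendsto_zero_iff_abs_tendsto_zero]
    simpa only [Function.comp_def, Real.sqrt_sq_eq_abs, Real.sqrt_zero] using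
      (Real.continuous_sqrt.tendsto 0).comp (tendsto_zero_of_natCast_mul hN hNθ)
  have hterm (x : X) : Tendsto (fun i => N i * (Complex.exp ((θ i * d i x : ℝ) * Complex.I) - 1 -
      (θ i * d i x : ℝ) * Complex.I)) l (𝓝 ((-(r * d₀ x ^ 2) : ℝ) / 2)) := by
    have hdx := tendsto_pi_nhds.1 hd x
    apply tendsto_mul_exp_sub_one_sub_self
    · simpa using (hθ.mul hdx).ofReal.mul_const Complex.I
    · refine ((hNθ.mul (hdx.pow 2)).neg.ofReal).congr fun i => ?_
      rw [mul_pow, Complex.I_sq]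
      push_cast
      ring
  have hbase : Tendsto (fun i => N i * (weightedCharFun (w i) (d i) (θ i) - 1)) l
      (𝓝 (-(r * ∑ x, w₀ x * d₀ x ^ 2) / 2 : ℝ)) := by
    have hsum := tendsto_finsetSum Finset.univ fun x _ =>
      (tendsto_pi_nhds.1 hw x).ofReal.mul (hterm x)
    convert hsum using 1
    · ext i
      rw [weightedCharFun_sub_one (hw_sum i) (hwd_sum i), Finset.mul_sum]
      exact Finset.sum_congr rfl fun x _ => by ring
    · push_cast
      rw [Finset.mul_sum, ← Finset.sum_neg_distrib, Finset.sum_div]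
      exact congrArg 𝓝 (Finset.sum_congr rfl fun x _ => by ring)
  simpa only [add_sub_cancel] using tendsto_one_add_pow_exp hN hbase

end Asymptotics

section CharacteristicFunctions

variable {X : Type*} [Fintype X]

lemma norm_weightedCharFun_le {w : X → ℝ} (hw : ∀ x, 0 ≤ w x) (d : X → ℝ) (θ : ℝ) :
    ‖weightedCharFun w d θ‖ ≤ ∑ x, w x := by
  refine norm_sum_le_of_le _ fun x _ => ?_
  rw [norm_mul, Complex.norm_exp_ofReal_mul_I, mul_one, Complex.norm_of_nonneg (hw x)]

lemma weightedCharFun_mul_left (w d : X → ℝ) (a θ : ℝ) :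
    weightedCharFun w (fun x => a * d x) θ = weightedCharFun w d (θ * a) := by
  simp only [weightedCharFun, mul_assoc]

lemma weightedCharFun_prod {Y : Type*} [Fintype Y] (m : X → ℝ) (p : X → Y → ℝ) (d : X × Y → ℝ)
    (θ : ℝ) :
    weightedCharFun (fun k : X × Y => m k.1 * p k.1 k.2) d θ =
      ∑ x, m x * weightedCharFun (p x) (fun y => d (x, y)) θ := by
  simp only [weightedCharFun, Fintype.sum_prod_type, Finset.mul_sum, Complex.ofReal_mul, mul_assoc]

lemma weightedCharFun_pi {E : Type*} [Fintype E] [DecidableEq E] (w d : E → X → ℝ) (θ : ℝ) :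
    weightedCharFun (fun x : E → X => ∏ e, w e (x e)) (fun x => ∑ e, d e (x e)) θ =
      ∏ e, weightedCharFun (w e) (d e) θ := by
  simp only [weightedCharFun, Fintype.prod_sum, Finset.prod_mul_distrib, ← Complex.exp_sum,
    Finset.mul_sum, Finset.sum_mul, Complex.ofReal_sum, Complex.ofReal_prod]

lemma prod_comp_eq_prod_pow_card {E G M : Type*} [Fintype E] [Fintype G] [DecidableEq G]
    [CommMonoid M] (k : E → G) (f : G → M) : ∏ e, f (k e) = ∏ g, f g ^ #{e | k e = g} := by
  rw [← Finset.prod_fiberwise' univ k f]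
  simp only [Finset.prod_const]

end CharacteristicFunctions

section FiniteLaws

variable {Ω K : Type*} [MeasurableSpace Ω] {P : Measure Ω} {f : Ω → K}

lemma nullMeasurableSet_of_measure_add_measure_compl_le [IsFiniteMeasure P] {s : Set Ω}
    (h : P s + P sᶜ ≤ P Set.univ) : NullMeasurableSet s P := by
  have hunion : toMeasurable P s ∪ toMeasurable P sᶜ = Set.univ := by
    rw [Set.eq_univ_iff_forall]
    intro ω
    exact (em (ω ∈ s)).imp (subset_toMeasurable P s ·) (subset_toMeasurable P sᶜ ·)
  have hinter : P (toMeasurable P s ∩ toMeasurable P sᶜ) = 0 := by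
    have hadd := measure_union_add_inter (μ := P) (toMeasurable P s)
      (measurableSet_toMeasurable P sᶜ)
    rw [hunion, measure_toMeasurable, measure_toMeasurable] at hadd
    rw [← hadd] at h
    exact nonpos_iff_eq_zero.1
      ((ENNReal.add_le_add_iff_left (measure_ne_top P _)).1 (h.trans_eq (add_zero _).symm))
  refine (measurableSet_toMeasurable P s).nullMeasurableSet.congr
    ((subset_toMeasurable P s).eventuallyLE.antisymm ?_).symm
  refine ae_le_set.2 (measure_mono_null ?_ hinter)
  exact fun ω hω => ⟨hω.1, subset_toMeasurable P sᶜ hω.2⟩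

variable [Fintype K] [MeasurableSpace K] [MeasurableSingletonClass K] [IsProbabilityMeasure P]

lemma aemeasurable_of_sum_measure_preimage_singleton (h : ∑ k, P (f ⁻¹' {k}) = 1) :
    AEMeasurable f P := by
  classical
  have hle (S : Finset K) : P (f ⁻¹' S) ≤ ∑ k ∈ S, P (f ⁻¹' {k}) := by
    refine (measure_mono ?_).trans (measure_biUnion_finset_le S fun k => f ⁻¹' {k})
    exact fun ω hω => Set.mem_biUnion hω rfl
  refine NullMeasurable.aemeasurable fun S _ => ?_
  apply nullMeasurableSet_of_measure_add_measure_compl_le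
  have hS := add_le_add (hle S.toFinset) (hle S.toFinsetᶜ)
  rwa [Finset.sum_add_sum_compl, h, Finset.coe_compl, Set.coe_toFinset, Set.preimage_compl,
    ← measure_univ (μ := P)] at hS

lemma charFun_map_comp {m : K → ℝ} (hm : ∀ k, 0 ≤ m k)
    (hf : AEMeasurable f P) (hlaw : ∀ k, P (f ⁻¹' {k}) = ENNReal.ofReal (m k)) (Z : K → ℝ)
    (θ : ℝ) : charFun (P.map (Z ∘ f)) θ = weightedCharFun m Z θ := by
  have hZ : Measurable Z := measurable_of_countable Z
  have := Measure.isProbabilityMeasure_map hf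
  rw [← AEMeasurable.map_map_of_aemeasurable hZ.aemeasurable hf, charFun_apply_real,
    integral_map hZ.aemeasurable (by fun_prop), integral_fintype .of_finite]
  refine Finset.sum_congr rfl fun k _ => ?_
  rw [map_measureReal_apply_of_aemeasurable hf (measurableSet_singleton k), measureReal_def,
    hlaw, ENNReal.toReal_ofReal (hm k), Complex.real_smul, Complex.ofReal_mul]

end FiniteLaws

section ConvergenceInDistribution

open Topology

variable {Ω : ℕ → Type*} [∀ i, MeasurableSpace (Ω i)] {P : ∀ i, Measure (Ω i)}
  [∀ i, IsProbabilityMeasure (P i)]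

theorem tendstoInDistribution_gaussianReal_of_weightedCharFun {K : ℕ → Type*} [∀ i, Fintype (K i)]
    {f : ∀ i, Ω i → K i} {m Z : ∀ i, K i → ℝ} (hm : ∀ i k, 0 ≤ m i k) (hm_sum : ∀ i, ∑ k, m i k = 1)
    (hlaw : ∀ i k, P i (f i ⁻¹' {k}) = ENNReal.ofReal (m i k)) {v : NNReal}
    (hchar : ∀ θ : ℝ, Tendsto (fun i => weightedCharFun (m i) (Z i) θ) atTop
      (𝓝 (Complex.exp (-(θ ^ 2 * v) / 2 : ℝ)))) :
    TendstoInDistribution (fun i ω => Z i (f i ω)) atTop id P (gaussianReal 0 v) := by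
  let _ (i : ℕ) : MeasurableSpace (K i) := ⊤
  have hf (i : ℕ) : AEMeasurable (f i) (P i) := by
    apply aemeasurable_of_sum_measure_preimage_singleton
    simp only [hlaw]
    rw [← ENNReal.ofReal_sum_of_nonneg fun k _ => hm i k, hm_sum, ENNReal.ofReal_one]
  refine ⟨fun i => (measurable_from_top (f := Z i)).comp_aemeasurable (hf i), aemeasurable_id,
    ProbabilityMeasure.tendsto_of_tendsto_charFun fun θ => ?_⟩
  convert hchar θ using 2 with i
  · exact charFun_map_comp (hm i) (hf i) (hlaw i) (Z i) θ
  · rw [ProbabilityMeasure.coe_mk, Measure.map_id, charFun_gaussianReal]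
    push_cast
    ring_nf

lemma tendsto_measure_le_of_tendstoInDistribution_gaussianReal {X : ∀ i, Ω i → ℝ} {v : NNReal}
    (hv : v ≠ 0) (hX : TendstoInDistribution X atTop id P (gaussianReal 0 v)) (x : ℝ) :
    Tendsto (fun i => P i {ω | X i ω ≤ x}) atTop (𝓝 (gaussianReal 0 v (Set.Iic x))) := by
  have := nullSingletonClass_gaussianReal (μ := 0) hv
  have hfrontier : (gaussianReal 0 v).map id (frontier (Set.Iic x)) = 0 := by
    rw [frontier_Iic, Measure.map_id, measure_singleton]
  convert ProbabilityMeasure.tendsto_measure_of_null_frontier_of_tendsto' hX.tendsto hfrontier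
    using 2 with i
  · exact (Measure.map_apply_of_aemeasurable (hX.forall_aemeasurable i) measurableSet_Iic).symm
  · rw [ProbabilityMeasure.coe_mk, Measure.map_id]

-- A convergent sequence of laws is tight, so no mass escapes beyond radii tending to infinity.
lemma tendsto_measure_lt_abs_of_tendstoInDistribution {Ω' : Type*} [MeasurableSpace Ω']
    {P' : Measure Ω'} [IsProbabilityMeasure P'] {X : ∀ i, Ω i → ℝ} {X' : Ω' → ℝ}
    (hX : TendstoInDistribution X atTop X' P P') {r : ℕ → ℝ} (hr : Tendsto r atTop atTop) :
    Tendsto (fun i => P i {ω | r i < |X i ω|}) atTop (𝓝 0) := by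
  have htight := tendsto_measure_norm_gt_of_isTightMeasureSet
    (isTightMeasureSet_of_isCompact_closure (hX.tendsto.isCompact_insert_range.closure_of_subset
      (Set.subset_insert _ _)))
  refine tendsto_of_tendsto_of_tendsto_of_le_of_le tendsto_const_nhds (htight.comp hr)
    (fun _ => zero_le) fun i => ?_
  calc P i {ω | r i < |X i ω|} = (P i).map (X i) {x | r i < ‖x‖} :=
        (Measure.map_apply_of_aemeasurable (hX.forall_aemeasurable i)
          (measurableSet_lt measurable_const measurable_norm)).symm
    _ ≤ _ := le_iSup₂_of_le _ ⟨_, Set.mem_range_self i, rfl⟩ le_rfl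

lemma tendsto_measure_lt_abs_sub_of_tendstoInDistribution {Ω' : Type*} [MeasurableSpace Ω']
    {P' : Measure Ω'} [IsProbabilityMeasure P'] {U : ∀ i, Ω i → ℝ} {X' : Ω' → ℝ} {a p : ℕ → ℝ}
    {p₀ ε : ℝ} (ha : Tendsto a atTop atTop) (hp : Tendsto p atTop (𝓝 p₀))
    (hU : TendstoInDistribution (fun i ω => a i * (U i ω - p i)) atTop X' P P') (hε : 0 < ε) :
    Tendsto (fun i => P i {ω | ε < |U i ω - p₀|}) atTop (𝓝 0) := by
  have hfar := tendsto_measure_lt_abs_of_tendstoInDistribution hU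
    (ha.atTop_mul_const (half_pos hε))
  refine tendsto_of_tendsto_of_tendsto_of_le_of_le' tendsto_const_nhds hfar
    (.of_forall fun _ => zero_le) ?_
  filter_upwards [ha.eventually_gt_atTop 0, (Metric.tendsto_nhds.1 hp) _ (half_pos hε)]
    with i hai hpi
  refine measure_mono fun ω (hω : ε < |U i ω - p₀|) => ?_
  have htri := abs_sub_le (U i ω) (p i) p₀
  rw [Real.dist_eq] at hpi
  rw [Set.mem_ofPred_eq, abs_mul, abs_of_pos hai]
  exact mul_lt_mul_of_pos_left (by linarith) hai

end ConvergenceInDistribution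

section Labels

open Topology

lemma sum_prod_eq_one {X : Type*} [Fintype X] {w : X → ℝ} (hw : ∑ x, w x = 1) (n : ℕ) :
    ∑ x : Fin n → X, ∏ i, w (x i) = 1 := by
  rw [← Fintype.sum_pow, hw, one_pow]

lemma sum_prod_mul_sum_sq {X : Type*} [Fintype X] {w d : X → ℝ} (hw : ∑ x, w x = 1)
    (hwd : ∑ x, w x * d x = 0) (n : ℕ) :
    ∑ x : Fin n → X, (∏ i, w (x i)) * (∑ i, d (x i)) ^ 2 = n * ∑ x, w x * d x ^ 2 := by
  induction n with
  | zero => simp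
  | succ n ih =>
    rw [← (Fin.consEquiv fun _ : Fin (n + 1) => X).sum_comp, Fintype.sum_prod_type_right]
    have hcons (x : Fin n → X) (a : X) :
        (∏ i, w (Fin.consEquiv (fun _ : Fin (n + 1) => X) (a, x) i)) *
            (∑ i, d (Fin.consEquiv (fun _ : Fin (n + 1) => X) (a, x) i)) ^ 2 =
          (∏ i, w (x i)) * (w a * d a ^ 2) +
            2 * ((∏ i, w (x i)) * ∑ i, d (x i)) * (w a * d a) +
            (∏ i, w (x i)) * (∑ i, d (x i)) ^ 2 * w a := by
      simp only [Fin.consEquiv_apply, Fin.prod_univ_succ, Fin.sum_univ_succ, Fin.cons_zero,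
        Fin.cons_succ]
      ring
    simp only [hcons, Finset.sum_add_distrib, ← Finset.mul_sum, ← Finset.sum_mul, hw, hwd, ih,
      sum_prod_eq_one hw, mul_zero, add_zero, mul_one, one_mul]
    push_cast
    ring

section Averaging

variable {ι : Type*} {l : Filter ι} {X : ι → Type*} {ξ : ∀ i, X i → ℝ} {a C : ℝ}
  {F : ∀ i, X i → ℂ} {z : ℂ}

lemma exists_forall_norm_sub_lt_of_tendsto_comap
    (hF : Tendsto (fun s : Σ i, X i => F s.1 s.2)
      (comap Sigma.fst l ⊓ comap (fun s => ξ s.1 s.2) (𝓝 a)) (𝓝 z)) {ε : ℝ} (hε : 0 < ε) :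
    ∃ δ > 0, ∀ᶠ i in l, ∀ x, |ξ i x - a| < δ → ‖F i x - z‖ < ε := by
  have hev := (Metric.tendsto_nhds.1 hF) ε hε
  rw [Filter.Eventually, ((l.basis_sets.comap _).inf (Metric.nhds_basis_ball.comap _)).mem_iff]
    at hev
  obtain ⟨⟨S, δ⟩, ⟨hS, hδ⟩, hsub⟩ := hev
  refine ⟨δ, hδ, ?_⟩
  filter_upwards [hS] with i hi x hx
  rw [← dist_eq_norm]
  exact @hsub ⟨i, x⟩ ⟨hi, hx⟩

-- The pointwise form of Chebyshev's inequality: `1 ≤ ((ξ - a) / δ) ^ 2` away from `a`.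
lemma exists_forall_norm_sub_le_of_tendsto_comap (hC : ∀ i x, ‖F i x‖ ≤ C)
    (hF : Tendsto (fun s : Σ i, X i => F s.1 s.2)
      (comap Sigma.fst l ⊓ comap (fun s => ξ s.1 s.2) (𝓝 a)) (𝓝 z)) {ε : ℝ} (hε : 0 < ε) :
    ∃ M, ∀ᶠ i in l, ∀ x, ‖F i x - z‖ ≤ ε + M * (ξ i x - a) ^ 2 := by
  obtain ⟨δ, hδ, hnear⟩ := exists_forall_norm_sub_lt_of_tendsto_comap hF hε
  refine ⟨(C + ‖z‖) / δ ^ 2, ?_⟩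
  filter_upwards [hnear] with i hi x
  have hbound : ‖F i x - z‖ ≤ C + ‖z‖ := (norm_sub_le _ _).trans (by gcongr; exact hC i x)
  have hCz : 0 ≤ C + ‖z‖ := (norm_nonneg _).trans hbound
  rcases lt_or_ge |ξ i x - a| δ with hx | hx
  · exact (hi x hx).le.trans (le_add_of_nonneg_right (by positivity))
  · calc ‖F i x - z‖ ≤ (C + ‖z‖) / δ ^ 2 * δ ^ 2 := by rwa [div_mul_cancel₀ _ (by positivity)]
      _ ≤ (C + ‖z‖) / δ ^ 2 * (ξ i x - a) ^ 2 := by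
        rw [← sq_abs (ξ i x - a)]
        gcongr
      _ ≤ ε + (C + ‖z‖) / δ ^ 2 * (ξ i x - a) ^ 2 := le_add_of_nonneg_left hε.le

theorem tendsto_sum_mul_of_tendsto_comap [∀ i, Fintype (X i)] {w : ∀ i, X i → ℝ}
    (hw : ∀ i x, 0 ≤ w i x) (hw_sum : ∀ i, ∑ x, w i x = 1)
    (hξ : Tendsto (fun i => ∑ x, w i x * (ξ i x - a) ^ 2) l (𝓝 0)) (hC : ∀ i x, ‖F i x‖ ≤ C)
    (hF : Tendsto (fun s : Σ i, X i => F s.1 s.2)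
      (comap Sigma.fst l ⊓ comap (fun s => ξ s.1 s.2) (𝓝 a)) (𝓝 z)) :
    Tendsto (fun i => ∑ x, w i x * F i x) l (𝓝 z) := by
  rw [Metric.tendsto_nhds]
  intro ε hε
  obtain ⟨M, hM⟩ := exists_forall_norm_sub_le_of_tendsto_comap hC hF (half_pos hε)
  have hsmall := (hξ.const_mul M).eventually_lt_const (by rw [mul_zero]; exact half_pos hε)
  filter_upwards [hM, hsmall] with i hbound hi
  have hone : ∑ x, (w i x : ℂ) = 1 := mod_cast hw_sum i
  calc dist (∑ x, w i x * F i x) z = ‖∑ x, (w i x : ℂ) * (F i x - z)‖ := by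
        simp only [dist_eq_norm, mul_sub, Finset.sum_sub_distrib, ← Finset.sum_mul, hone, one_mul]
    _ ≤ ∑ x, w i x * (ε / 2 + M * (ξ i x - a) ^ 2) := by
        refine norm_sum_le_of_le _ fun x _ => ?_
        rw [norm_mul, Complex.norm_of_nonneg (hw i x)]
        exact mul_le_mul_of_nonneg_left (hbound x) (hw i x)
    _ = ε / 2 + M * ∑ x, w i x * (ξ i x - a) ^ 2 := by
        simp only [mul_add, Finset.sum_add_distrib, ← Finset.sum_mul, hw_sum, one_mul,
          Finset.mul_sum, mul_left_comm]
    _ < ε := by linarith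

end Averaging

/-- Frequency of group 1 (label `true`) among `n` labels. -/
def labelFreq {n : ℕ} (l : Fin n → Bool) : ℝ := #{i | l i = true} / n

lemma labelMass_nonneg {κ : ℝ} (hκ : κ ∈ Set.Icc 0 1) {n : ℕ} (l : Fin n → Bool) :
    0 ≤ labelMass κ l := by
  refine Finset.prod_nonneg fun i _ => ?_
  split_ifs
  exacts [hκ.1, sub_nonneg.2 hκ.2]

lemma sum_labelMass (κ : ℝ) (n : ℕ) : ∑ l : Fin n → Bool, labelMass κ l = 1 :=
  sum_prod_eq_one (w := fun x : Bool => if x then κ else 1 - κ) (by simp) n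

lemma sum_labelMass_mul_labelFreq_sub_sq (κ : ℝ) {n : ℕ} (hn : n ≠ 0) :
    ∑ l : Fin n → Bool, labelMass κ l * (labelFreq l - κ) ^ 2 = κ * (1 - κ) / n := by
  have hvar := sum_prod_mul_sum_sq (w := fun x : Bool => if x then κ else 1 - κ)
    (d := fun x => (if x then 1 else 0) - κ) (by simp) (by simp; ring) n
  have hfreq (l : Fin n → Bool) : labelFreq l - κ = (∑ i, ((if l i then 1 else 0) - κ)) / n := by
    rw [labelFreq, Finset.sum_sub_distrib, Finset.sum_boole]
    simp only [Finset.sum_const, Finset.card_univ, Fintype.card_fin, nsmul_eq_mul]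
    field_simp
  simp only [hfreq, div_pow, ← mul_div_assoc, ← Finset.sum_div]
  simp only [labelMass, hvar, Fintype.sum_bool]
  simp only [↓reduceIte, Bool.false_eq_true, zero_sub, even_two, Even.neg_pow]
  field_simp
  ring

end Labels

section Pairs

open Topology

/-- The unordered pairs of distinct vertices, written as `i < j`. -/
abbrev Pair (n : ℕ) : Type := {p : Fin n × Fin n // p.1 < p.2}

@[to_additive]
lemma prod_filter_lt_eq_prod_pair {M : Type*} [CommMonoid M] {n : ℕ} (f : Fin n × Fin n → M) :
    ∏ p with p.1 < p.2, f p = ∏ e : Pair n, f e :=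
  Finset.prod_subtype _ (by simp) f

lemma two_mul_sum_pair {n : ℕ} {f : Fin n → Fin n → ℝ} (hf : ∀ i j, f i j = f j i) :
    2 * ∑ e : Pair n, f e.1.1 e.1.2 = ∑ i, ∑ j, f i j - ∑ i, f i i := by
  have hlt : ∑ e : Pair n, f e.1.1 e.1.2 = ∑ i, ∑ j, if i < j then f i j else 0 := by
    rw [← sum_filter_lt_eq_sum_pair fun p => f p.1 p.2, Finset.sum_filter, Fintype.sum_prod_type]
  have hgt : ∑ e : Pair n, f e.1.1 e.1.2 = ∑ i, ∑ j, if j < i then f i j else 0 := by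
    rw [hlt, Finset.sum_comm]
    simp only [hf]
  have hdiag : ∑ i, f i i = ∑ i, ∑ j, if i = j then f i j else 0 := by simp
  have hsplit : ∑ i, ∑ j, f i j = (∑ i, ∑ j, if i < j then f i j else 0) +
      (∑ i, ∑ j, if j < i then f i j else 0) + ∑ i, ∑ j, if i = j then f i j else 0 := by
    simp only [← Finset.sum_add_distrib]
    refine Finset.sum_congr rfl fun i _ => Finset.sum_congr rfl fun j _ => ?_
    rcases lt_trichotomy i j with h | rfl | h
    · simp [h, h.not_gt, h.ne]
    · simp
    · simp [h, h.not_gt, h.ne']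
  rw [hsplit, ← hlt, ← hgt, ← hdiag]
  ring

variable {X : Type*} [Fintype X] [DecidableEq X]

lemma sum_comp_eq_sum_card_mul {E : Type*} [Fintype E] (c : E → X) (f : X → ℝ) :
    ∑ e, f (c e) = ∑ x, #{e | c e = x} * f x := by
  rw [← Finset.sum_fiberwise' univ c f]
  simp only [Finset.sum_const, nsmul_eq_mul]

lemma two_mul_sum_pair_comp {n : ℕ} (c : Fin n → X) {F : X → X → ℝ} (hF : ∀ x y, F x y = F y x) :
    2 * ∑ e : Pair n, F (c e.1.1) (c e.1.2) =
      ∑ x, ∑ y, #{i | c i = x} * #{i | c i = y} * F x y - ∑ x, #{i | c i = x} * F x x := by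
  rw [two_mul_sum_pair fun i j => hF (c i) (c j), sum_comp_eq_sum_card_mul c fun x => F x x]
  rw [sum_comp_eq_sum_card_mul c fun x => ∑ j, F x (c j)]
  simp only [sum_comp_eq_sum_card_mul c, Finset.mul_sum, mul_assoc]

theorem tendsto_sum_pair_comp_div_sq {σ : Type*} {l : Filter σ} {n : σ → ℕ}
    (hn : Tendsto n l atTop) {c : ∀ s, Fin (n s) → X} {r : X → ℝ}
    (hc : ∀ x, Tendsto (fun s => (#{i | c s i = x} : ℝ) / n s) l (𝓝 (r x))) {F : X → X → ℝ}
    (hF : ∀ x y, F x y = F y x) :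
    Tendsto (fun s => (∑ e : Pair (n s), F (c s e.1.1) (c s e.1.2)) / (n s : ℝ) ^ 2) l
      (𝓝 ((∑ x, ∑ y, r x * r y * F x y) / 2)) := by
  have hmain := tendsto_finsetSum univ fun x _ => tendsto_finsetSum univ fun y _ =>
    ((hc x).mul (hc y)).mul_const (F x y)
  have hdiag := (tendsto_finsetSum univ fun x _ => (hc x).mul_const (F x x)).mul
    ((tendsto_inv_atTop_nhds_zero_nat (𝕜 := ℝ)).comp hn)
  rw [mul_zero] at hdiag
  refine (sub_zero (∑ x, ∑ y, r x * r y * F x y) ▸ (hmain.sub hdiag).div_const 2).congr fun s => ?_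
  rw [eq_div_of_mul_eq two_ne_zero ((mul_comm _ _).trans (two_mul_sum_pair_comp (c s) hF))]
  simp only [Function.comp_apply, mul_div_assoc', div_mul_eq_mul_div, ← Finset.sum_div]
  ring

end Pairs

section Blocks

open Topology

/-- The block containing a pair with labels `x` and `y`, in the order of `blockScale`: `0` within
group 1 (label `true`), `1` within group 2, `2` between the groups. -/
def blockOf : Bool → Bool → Fin 3
  | true, true => 0
  | false, false => 1
  | _, _ => 2

/-- The indicator of the pairs in block `g`, in the form expected by `u1hat` and `u2hat`. -/
def inBlock {n : ℕ} (l : Fin n → Bool) (g : Fin 3) : Fin n → Fin n → Bool :=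
  fun i j => decide (blockOf (l i) (l j) = g)

/-- The number of pairs in block `g`. -/
def blockSize {n : ℕ} (l : Fin n → Bool) (g : Fin 3) : ℕ :=
  #{e : Pair n | blockOf (l e.1.1) (l e.1.2) = g}

lemma blockOf_comm (x y : Bool) : blockOf x y = blockOf y x := by
  decide +revert

lemma inBlock_zero {n : ℕ} (l : Fin n → Bool) : inBlock l 0 = within1 l := by
  ext i j
  cases hi : l i <;> cases hj : l j <;> simp [inBlock, blockOf, within1, hi, hj]

lemma inBlock_one {n : ℕ} (l : Fin n → Bool) : inBlock l 1 = within2 l := by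
  ext i j
  cases hi : l i <;> cases hj : l j <;> simp [inBlock, blockOf, within2, hi, hj]

lemma inBlock_two {n : ℕ} (l : Fin n → Bool) : inBlock l 2 = between l := by
  ext i j
  cases hi : l i <;> cases hj : l j <;> simp [inBlock, blockOf, between, hi, hj]

lemma sbmB_eq_vecCons_blockOf (x₁ x₂ xb : ℝ) :
    sbmB x₁ x₂ xb = fun x y => ![x₁, x₂, xb] (blockOf x y) := by
  ext x y
  cases x <;> cases y <;> rfl

lemma blockScale_pos {κ : ℝ} (hκ : κ ∈ Set.Ioo 0 1) (g : ℕ) : 0 < blockScale κ g := by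
  have hκ' : 0 < 1 - κ := sub_pos.2 hκ.2
  have := hκ.1
  unfold blockScale
  split_ifs <;> positivity

lemma sum_sum_mul_blockOf (κ : ℝ) (g : Fin 3) :
    (∑ x, ∑ y, (if x then κ else 1 - κ) * (if y then κ else 1 - κ) *
      if blockOf x y = g then 1 else 0) / 2 = blockScale κ g := by
  fin_cases g <;> simp [blockOf, blockScale] <;> ring

variable {σ : Type*} {L : Filter σ} {n : σ → ℕ} {κ : ℝ}

lemma tendsto_card_label_div (hn : Tendsto n L atTop) {l : ∀ s, Fin (n s) → Bool}
    (hl : Tendsto (fun s => labelFreq (l s)) L (𝓝 κ)) (x : Bool) :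
    Tendsto (fun s => (#{i | l s i = x} : ℝ) / n s) L (𝓝 (if x then κ else 1 - κ)) := by
  cases x with
  | true => exact hl
  | false =>
    refine (hl.const_sub 1).congr' ?_
    filter_upwards [hn.eventually_gt_atTop 0] with s hs
    have hadd : (#{i | l s i = true} : ℝ) + #{i | l s i = false} = n s := by
      have := Finset.card_filter_add_card_filter_not (s := univ) fun i => l s i = true
      simp only [Bool.not_eq_true, Finset.card_univ, Fintype.card_fin] at this
      exact_mod_cast this
    rw [labelFreq, eq_div_iff (by positivity), sub_mul, div_mul_cancel₀ _ (by positivity)]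
    linarith

lemma tendsto_blockSize_div_sq (hn : Tendsto n L atTop) {l : ∀ s, Fin (n s) → Bool}
    (hl : Tendsto (fun s => labelFreq (l s)) L (𝓝 κ)) (g : Fin 3) :
    Tendsto (fun s => (blockSize (l s) g : ℝ) / (n s : ℝ) ^ 2) L (𝓝 (blockScale κ g)) := by
  have h := tendsto_sum_pair_comp_div_sq hn (tendsto_card_label_div hn hl)
    (F := fun x y => if blockOf x y = g then 1 else 0) fun x y => by rw [blockOf_comm]
  simpa only [sum_sum_mul_blockOf, Finset.sum_boole, blockSize] using h

lemma tendsto_atTop_of_tendsto_div_sq {N : σ → ℕ} {a : ℝ} (hn : Tendsto n L atTop) (ha : 0 < a)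
    (hN : Tendsto (fun s => (N s : ℝ) / (n s : ℝ) ^ 2) L (𝓝 a)) : Tendsto N L atTop := by
  have hsq : Tendsto (fun s => (n s : ℝ) ^ 2) L atTop :=
    (tendsto_pow_atTop two_ne_zero).comp (tendsto_natCast_atTop_atTop.comp hn)
  refine tendsto_natCast_atTop_iff.1 ((hN.pos_mul_atTop ha hsq).congr' ?_)
  filter_upwards [hn.eventually_gt_atTop 0] with s hs
  exact div_mul_cancel₀ _ (by positivity)

lemma tendsto_mul_div_sq {N : σ → ℕ} {a : ℝ} (ha : a ≠ 0)
    (hN : Tendsto (fun s => (N s : ℝ) / (n s : ℝ) ^ 2) L (𝓝 a)) :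
    Tendsto (fun s => (N s : ℝ) * ((n s : ℝ) / N s) ^ 2) L (𝓝 a⁻¹) := by
  refine (hN.inv₀ ha).congr fun s => ?_
  rcases eq_or_ne (N s : ℝ) 0 with h | h
  · simp [h]
  · field_simp

end Blocks

section PairModel

open Matrix Topology

/-- The law of `(A i j, Y i j, Y' i j)` for a pair with edge probability `p` and error rate `b`. -/
def pairWeight (p b : ℝ) (x : Bool × Bool × Bool) : ℝ :=
  (if x.1 then p else 1 - p) *
    ((if x.1 then (if x.2.1 then 1 - b else b) else (if x.2.1 then 0 else 1)) *
      (if x.1 then (if x.2.2 then 1 - b else b) else (if x.2.2 then 0 else 1)))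

/-- The contribution of one pair to the linear combination with coefficients `τ` of the centred
moments `û₁` and `û₂`. -/
def pairStat (p b : ℝ) (τ : Fin 2 → ℝ) (x : Bool × Bool × Bool) : ℝ :=
  τ 0 * ((if x.2.1 then 1 else 0) - (1 - b) * p) +
    τ 1 * ((if x.2.1 != x.2.2 then 1 else 0) / 2 - b * ((1 - b) * p))

lemma pairWeight_nonneg {p b : ℝ} (hp : p ∈ Set.Icc 0 1) (hb : b ∈ Set.Icc 0 1)
    (x : Bool × Bool × Bool) : 0 ≤ pairWeight p b x := by
  obtain ⟨hp₀, hp₁⟩ := hp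
  obtain ⟨hb₀, hb₁⟩ := hb
  refine mul_nonneg ?_ (mul_nonneg ?_ ?_) <;> split_ifs <;> linarith

lemma continuous_pairWeight : Continuous fun s : ℝ × ℝ => pairWeight s.1 s.2 := by
  refine continuous_pi fun x => ?_
  unfold pairWeight
  split_ifs <;> fun_prop

lemma continuous_pairStat (τ : Fin 2 → ℝ) : Continuous fun s : ℝ × ℝ => pairStat s.1 s.2 τ := by
  unfold pairStat
  fun_prop

lemma sum_pairWeight_mul (p b : ℝ) (f : Bool × Bool × Bool → ℝ) :
    ∑ x, pairWeight p b x * f x =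
      (1 - p) * f (false, false, false) + p * ((1 - b) ^ 2 * f (true, true, true) +
        (1 - b) * b * (f (true, true, false) + f (true, false, true)) +
        b ^ 2 * f (true, false, false)) := by
  simp only [Fintype.sum_prod_type, Fintype.sum_bool, pairWeight, Bool.false_eq_true, ↓reduceIte]
  ring

lemma sum_pairWeight (p b : ℝ) : ∑ x, pairWeight p b x = 1 := by
  have h := sum_pairWeight_mul p b fun _ => 1
  simp only [mul_one] at h
  linear_combination h

lemma sum_pairWeight_mul_pairStat (p b : ℝ) (τ : Fin 2 → ℝ) :
    ∑ x, pairWeight p b x * pairStat p b τ x = 0 := by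
  simp only [sum_pairWeight_mul, pairStat, Bool.false_eq_true, ↓reduceIte, bne_self_eq_false,
    Bool.bne_true, Bool.bne_false, Bool.not_false]
  ring

lemma sum_pairWeight_mul_pairStat_sq (p b : ℝ) (τ : Fin 2 → ℝ) :
    ∑ x, pairWeight p b x * pairStat p b τ x ^ 2 = τ ⬝ᵥ SigmaU ((1 - b) * p) b *ᵥ τ := by
  simp only [sum_pairWeight_mul, pairStat, Bool.false_eq_true, ↓reduceIte, bne_self_eq_false,
    Bool.bne_true, Bool.bne_false, Bool.not_false, SigmaU, dotProduct, mulVec, Fin.sum_univ_two,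
    of_apply, cons_val_zero, cons_val_one, cons_val_fin_one, cons_val']
  ring

end PairModel

section Configurations

/-- The symmetric loopless adjacency matrix with prescribed values on the pairs. -/
def symmExtend {n : ℕ} (f : Pair n → Bool) (i j : Fin n) : Bool :=
  if h : i < j then f ⟨(i, j), h⟩ else if h : j < i then f ⟨(j, i), h⟩ else false

lemma symmExtend_pair {n : ℕ} (f : Pair n → Bool) (e : Pair n) :
    symmExtend f e.1.1 e.1.2 = f e := by
  simp [symmExtend, e.2]

lemma symmExtend_comm {n : ℕ} (f : Pair n → Bool) (i j : Fin n) :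
    symmExtend f i j = symmExtend f j i := by
  rcases lt_trichotomy i j with h | rfl | h
  · simp [symmExtend, h, h.not_gt]
  · rfl
  · simp [symmExtend, h, h.not_gt]

lemma symmExtend_self {n : ℕ} (f : Pair n → Bool) (i : Fin n) : symmExtend f i i = false := by
  simp [symmExtend]

lemma eq_symmExtend {n : ℕ} {a : Fin n → Fin n → Bool} (hsymm : ∀ i j, a i j = a j i)
    (hloop : ∀ i, a i i = false) : a = symmExtend fun e => a e.1.1 e.1.2 := by
  ext i j
  rcases lt_trichotomy i j with h | rfl | h
  · simp [symmExtend, h]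
  · simp [symmExtend, hloop]
  · simp [symmExtend, h, h.not_gt, hsymm i j]

/-- The labels together with the values of `(A, Y, Y')` on all pairs. -/
abbrev Config (n : ℕ) : Type := (Fin n → Bool) × (Pair n → Bool × Bool × Bool)

/-- The configuration realised at the sample point `ω`. -/
def configOf {Ω : Type*} {n : ℕ} (c : Ω → Fin n → Bool) (A Y Y' : Ω → Fin n → Fin n → Bool)
    (ω : Ω) : Config n :=
  (c ω, fun e => (A ω e.1.1 e.1.2, Y ω e.1.1 e.1.2, Y' ω e.1.1 e.1.2))

/-- The law of the values on the pairs given the labels `l`, for block parameters `p` and `b`. -/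
def condMass {n : ℕ} (p b : Fin 3 → ℝ) (l : Fin n → Bool) (x : Pair n → Bool × Bool × Bool) : ℝ :=
  ∏ e : Pair n, pairWeight (p (blockOf (l e.1.1) (l e.1.2))) (b (blockOf (l e.1.1) (l e.1.2))) (x e)

lemma condMass_nonneg {n : ℕ} {p b : Fin 3 → ℝ} (hp : ∀ g, p g ∈ Set.Icc 0 1)
    (hb : ∀ g, b g ∈ Set.Icc 0 1) (l : Fin n → Bool) (x : Pair n → Bool × Bool × Bool) :
    0 ≤ condMass p b l x :=
  Finset.prod_nonneg fun _ _ => pairWeight_nonneg (hp _) (hb _) _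

lemma sum_condMass {n : ℕ} (p b : Fin 3 → ℝ) (l : Fin n → Bool) : ∑ x, condMass p b l x = 1 := by
  unfold condMass
  rw [← Fintype.prod_sum]
  simp only [sum_pairWeight, Finset.prod_const_one]

variable {Ω : Type*} [MeasurableSpace Ω] {P : Measure Ω} {n : ℕ} {κ : ℝ} {c : Ω → Fin n → Bool}
  {A Y Y' : Ω → Fin n → Fin n → Bool}

lemma configOf_preimage_singleton {B βm : Bool → Bool → ℝ}
    (h : IsObsSBM P n B βm κ c A Y Y') (l : Fin n → Bool) (x : Pair n → Bool × Bool × Bool) :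
    configOf c A Y Y' ⁻¹' {(l, x)} = {ω | c ω = l ∧ A ω = (symmExtend fun e => (x e).1) ∧
      Y ω = (symmExtend fun e => (x e).2.1) ∧ Y' ω = symmExtend fun e => (x e).2.2} := by
  ext ω
  simp only [configOf, Set.mem_preimage, Set.mem_singleton_iff, Set.mem_ofPred_eq, Prod.mk.injEq]
  constructor
  · rintro ⟨rfl, rfl⟩
    exact ⟨rfl, eq_symmExtend (h.symmA ω) (h.looplessA ω),
      eq_symmExtend (h.symmY ω) (h.looplessY ω), eq_symmExtend (h.symmY' ω) (h.looplessY' ω)⟩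
  · rintro ⟨rfl, hA, hY, hY'⟩
    simp only [hA, hY, hY', symmExtend_pair, true_and]

lemma measure_configOf_preimage_singleton {p b : Fin 3 → ℝ}
    (h : IsObsSBM P n (fun x y => p (blockOf x y)) (fun x y => b (blockOf x y)) κ c A Y Y')
    (k : Config n) :
    P (configOf c A Y Y' ⁻¹' {k}) = ENNReal.ofReal (labelMass κ k.1 * condMass p b k.1 k.2) := by
  obtain ⟨l, x⟩ := k
  rw [configOf_preimage_singleton h, h.law _ _ _ _ (symmExtend_comm _) (symmExtend_self _)
    (symmExtend_comm _) (symmExtend_self _) (symmExtend_comm _) (symmExtend_self _)]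
  simp only [edgeMass, obsMass, condMass, pairWeight, prod_filter_lt_eq_prod_pair, symmExtend_pair,
    Finset.prod_mul_distrib, mul_assoc]

end Configurations

section BlockMoments

open Matrix

/-- The empirical moments `(û₁, û₂)` over the pairs selected by `cls`. -/
def empMoments {n : ℕ} (cls y y' : Fin n → Fin n → Bool) : Fin 2 → ℝ :=
  ![u1hat cls y, u2hat cls y y']

/-- The means of `û₁` and `û₂` over a block with edge probability `p` and error rate `b`. -/
def meanMoments (p b : ℝ) : Fin 2 → ℝ :=
  ![(1 - b) * p, b * ((1 - b) * p)]

/-- The empirical moments of a block, centred at their means and scaled by `n`. -/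
def scaledMoments {n : ℕ} (p b : ℝ) (cls y y' : Fin n → Fin n → Bool) : Fin 2 → ℝ :=
  (n : ℝ) • (empMoments cls y y' - meanMoments p b)

/-- The scaled moments of the three blocks as a function of the configuration. -/
def configMoments {n : ℕ} (p b : Fin 3 → ℝ) (k : Config n) (g : Fin 3) : Fin 2 → ℝ :=
  scaledMoments (p g) (b g) (inBlock k.1 g) (symmExtend fun e => (k.2 e).2.1)
    (symmExtend fun e => (k.2 e).2.2)

variable {n : ℕ}

lemma configMoments_configOf {Ω : Type*} [MeasurableSpace Ω] {P : Measure Ω} {κ : ℝ}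
    {B βm : Bool → Bool → ℝ} {c : Ω → Fin n → Bool} {A Y Y' : Ω → Fin n → Fin n → Bool}
    (h : IsObsSBM P n B βm κ c A Y Y') (p b : Fin 3 → ℝ) (ω : Ω) (g : Fin 3) :
    configMoments p b (configOf c A Y Y' ω) g =
      scaledMoments (p g) (b g) (inBlock (c ω) g) (Y ω) (Y' ω) := by
  simp only [configMoments, configOf, ← eq_symmExtend (h.symmY ω) (h.looplessY ω),
    ← eq_symmExtend (h.symmY' ω) (h.looplessY' ω)]

lemma pairCard_eq_card_pair (sel : Fin n → Fin n → Bool) :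
    pairCard sel = #{e : Pair n | sel e.1.1 e.1.2 = true} := by
  rw [pairCard, ← Finset.filter_filter, ← Finset.sum_boole, ← Finset.sum_boole,
    sum_filter_lt_eq_sum_pair]

lemma pairCard_inBlock (l : Fin n → Bool) (g : Fin 3) :
    pairCard (inBlock l g) = blockSize l g := by
  simp only [pairCard_eq_card_pair, inBlock, decide_eq_true_eq, blockSize]

lemma mul_pairCard_inBlock_and_div_sub {l : Fin n → Bool} {g : Fin 3} (hN : blockSize l g ≠ 0)
    (y : Fin n → Fin n → Bool) (r m a : ℝ) :
    a * (pairCard (fun i j => inBlock l g i j && y i j) / (r * blockSize l g) - m) =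
      ∑ e : Pair n with blockOf (l e.1.1) (l e.1.2) = g,
        a / blockSize l g * ((if y e.1.1 e.1.2 then 1 else 0) / r - m) := by
  have hcard : pairCard (fun i j => inBlock l g i j && y i j) =
      ∑ e : Pair n with blockOf (l e.1.1) (l e.1.2) = g, if y e.1.1 e.1.2 then 1 else 0 := by
    simp only [pairCard_eq_card_pair, inBlock, Bool.and_eq_true, decide_eq_true_eq,
      Finset.sum_boole, Finset.filter_filter]
  have hN' : (blockSize l g : ℝ) ≠ 0 := Nat.cast_ne_zero.2 hN
  rw [← Finset.mul_sum, Finset.sum_sub_distrib, ← Finset.sum_div, ← hcard, Finset.sum_const,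
    nsmul_eq_mul, ← blockSize]
  field_simp

lemma dotProduct_configMoments (p b : Fin 3 → ℝ) {k : Config n} {g : Fin 3}
    (hN : blockSize k.1 g ≠ 0) (τ : Fin 2 → ℝ) :
    τ ⬝ᵥ configMoments p b k g = ∑ e : Pair n with blockOf (k.1 e.1.1) (k.1 e.1.2) = g,
      n / blockSize k.1 g * pairStat (p g) (b g) τ (k.2 e) := by
  have h₁ := mul_pairCard_inBlock_and_div_sub hN (symmExtend fun e => (k.2 e).2.1) 1
    ((1 - b g) * p g) n
  have h₂ := mul_pairCard_inBlock_and_div_sub hN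
    (fun i j => symmExtend (fun e => (k.2 e).2.1) i j != symmExtend (fun e => (k.2 e).2.2) i j) 2
    (b g * ((1 - b g) * p g)) n
  rw [one_mul] at h₁
  simp only [dotProduct, Fin.sum_univ_two, configMoments, scaledMoments, empMoments,
    meanMoments, Pi.smul_apply, Pi.sub_apply, smul_eq_mul, cons_val_zero, cons_val_one,
    cons_val_fin_one, u1hat, u2hat, pairCard_inBlock, h₁, h₂, Finset.mul_sum,
    ← Finset.sum_add_distrib, symmExtend_pair, pairStat]
  refine Finset.sum_congr rfl fun e _ => ?_
  ring

lemma sum_dotProduct_configMoments (p b : Fin 3 → ℝ) {l : Fin n → Bool}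
    (hN : ∀ g, blockSize l g ≠ 0) (t : Fin 3 → Fin 2 → ℝ) (x : Pair n → Bool × Bool × Bool) :
    ∑ g, t g ⬝ᵥ configMoments p b (l, x) g =
      ∑ e : Pair n, n / blockSize l (blockOf (l e.1.1) (l e.1.2)) *
        pairStat (p (blockOf (l e.1.1) (l e.1.2))) (b (blockOf (l e.1.1) (l e.1.2)))
          (t (blockOf (l e.1.1) (l e.1.2))) (x e) := by
  rw [← Finset.sum_fiberwise univ fun e : Pair n => blockOf (l e.1.1) (l e.1.2)]
  refine Finset.sum_congr rfl fun g _ => ?_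
  rw [dotProduct_configMoments p b (hN g)]
  refine Finset.sum_congr rfl fun e he => ?_
  rw [(Finset.mem_filter.1 he).2]

theorem weightedCharFun_condMass (p b : Fin 3 → ℝ) {l : Fin n → Bool}
    (hN : ∀ g, blockSize l g ≠ 0) (t : Fin 3 → Fin 2 → ℝ) (θ : ℝ) :
    weightedCharFun (condMass p b l) (fun x => ∑ g, t g ⬝ᵥ configMoments p b (l, x) g) θ =
      ∏ g, weightedCharFun (pairWeight (p g) (b g)) (pairStat (p g) (b g) (t g))
        (θ * (n / blockSize l g)) ^ blockSize l g := by
  let k (e : Pair n) : Fin 3 := blockOf (l e.1.1) (l e.1.2)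
  simp only [sum_dotProduct_configMoments p b hN]
  calc weightedCharFun (condMass p b l) _ θ
      = ∏ e, weightedCharFun (pairWeight (p (k e)) (b (k e)))
          (fun x => n / blockSize l (k e) * pairStat (p (k e)) (b (k e)) (t (k e)) x) θ :=
        weightedCharFun_pi (fun e => pairWeight (p (k e)) (b (k e))) _ θ
    _ = ∏ e, weightedCharFun (pairWeight (p (k e)) (b (k e)))
          (pairStat (p (k e)) (b (k e)) (t (k e))) (θ * (n / blockSize l (k e))) := by
        simp only [weightedCharFun_mul_left]
    _ = ∏ g, weightedCharFun (pairWeight (p g) (b g)) (pairStat (p g) (b g) (t g))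
          (θ * (n / blockSize l g)) ^ blockSize l g :=
        prod_comp_eq_prod_pow_card k fun g => weightedCharFun (pairWeight (p g) (b g))
          (pairStat (p g) (b g) (t g)) (θ * (n / blockSize l g))

end BlockMoments

section LimitCovariance

open Matrix

lemma posDef_fin_two {a b d : ℝ} (ha : 0 < a) (hdet : b ^ 2 < a * d) :
    !![a, b; b, d].PosDef := by
  refine PosDef.of_dotProduct_mulVec_pos ?_ fun x hx => ?_
  · ext i j
    fin_cases i <;> fin_cases j <;> rfl
  · have hform : a * (star x ⬝ᵥ !![a, b; b, d] *ᵥ x) =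
        (a * x 0 + b * x 1) ^ 2 + (a * d - b ^ 2) * x 1 ^ 2 := by
      simp only [dotProduct, mulVec, Fin.sum_univ_two, Pi.star_apply, star_trivial, of_apply,
        cons_val_zero, cons_val_one, cons_val_fin_one, cons_val']
      ring
    refine pos_of_mul_pos_right (hform ▸ ?_) ha.le
    rcases eq_or_ne (x 1) 0 with h₁ | h₁
    · have h₀ : x 0 ≠ 0 := fun h₀ => hx (by ext i; fin_cases i <;> assumption)
      rw [h₁, mul_zero, add_zero, zero_pow two_ne_zero, mul_zero, add_zero]
      positivity
    · exact add_pos_of_nonneg_of_pos (sq_nonneg _)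
        (mul_pos (sub_pos.2 hdet) (sq_pos_of_ne_zero h₁))

theorem posDef_SigmaU {q β : ℝ} (hq : q ∈ Set.Ioo 0 1) (hβ : β ∈ Set.Ioo 0 1) :
    (SigmaU ((1 - β) * q) β).PosDef := by
  set r := (1 - β) * q
  have hr₀ : 0 < r := mul_pos (sub_pos.2 hβ.2) hq.1
  have hr₁ : r < 1 - β := mul_lt_of_lt_one_right (sub_pos.2 hβ.2) hq.2
  refine posDef_fin_two (mul_pos hr₀ (by linarith [hβ.1])) (sub_pos.1 ?_)
  calc 0 < β * r ^ 2 * (1 / 2 - r / 2 - β / 4) :=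
        mul_pos (mul_pos hβ.1 (pow_pos hr₀ 2)) (by linarith [hβ.1])
    _ = r * (1 - r) * ((1 / 2 - β * r) * β * r) - ((1 / 2 - r) * β * r) ^ 2 := by ring

/-- The variance of `∑ g, t g ⬝ᵥ (block g)` under the limiting block-diagonal Gaussian law, for
limiting edge probabilities `q` and error rates `β`. -/
def limitVariance (κ : ℝ) (q β : Fin 3 → ℝ) (t : Fin 3 → Fin 2 → ℝ) : ℝ :=
  ∑ g : Fin 3, (blockScale κ g)⁻¹ * (t g ⬝ᵥ SigmaU ((1 - β g) * q g) (β g) *ᵥ t g)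

variable {κ : ℝ} {q β : Fin 3 → ℝ}

lemma inv_blockScale_mul_SigmaU_pos (hκ : κ ∈ Set.Ioo 0 1) {p b : ℝ} (hp : p ∈ Set.Ioo 0 1)
    (hb : b ∈ Set.Ioo 0 1) (g : ℕ) {τ : Fin 2 → ℝ} (hτ : τ ≠ 0) :
    0 < (blockScale κ g)⁻¹ * (τ ⬝ᵥ SigmaU ((1 - b) * p) b *ᵥ τ) :=
  mul_pos (inv_pos.2 (blockScale_pos hκ g)) ((posDef_SigmaU hp hb).dotProduct_mulVec_pos hτ)

lemma limitVariance_pos (hκ : κ ∈ Set.Ioo 0 1) (hq : ∀ g, q g ∈ Set.Ioo 0 1)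
    (hβ : ∀ g, β g ∈ Set.Ioo 0 1) {t : Fin 3 → Fin 2 → ℝ} (ht : t ≠ 0) :
    0 < limitVariance κ q β t := by
  obtain ⟨g, hg⟩ := Function.ne_iff.1 ht
  refine Finset.sum_pos' (fun g _ => ?_)
    ⟨g, mem_univ g, inv_blockScale_mul_SigmaU_pos hκ (hq g) (hβ g) g hg⟩
  rcases eq_or_ne (t g) 0 with h₀ | h₀
  · rw [h₀, zero_dotProduct, mul_zero]
  · exact (inv_blockScale_mul_SigmaU_pos hκ (hq g) (hβ g) g h₀).le

lemma limitVariance_nonneg (hκ : κ ∈ Set.Ioo 0 1) (hq : ∀ g, q g ∈ Set.Ioo 0 1)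
    (hβ : ∀ g, β g ∈ Set.Ioo 0 1) (t : Fin 3 → Fin 2 → ℝ) : 0 ≤ limitVariance κ q β t := by
  rcases eq_or_ne t 0 with rfl | ht
  · simp only [limitVariance, Pi.zero_apply, zero_dotProduct, mul_zero, sum_const_zero, le_refl]
  · exact (limitVariance_pos hκ hq hβ ht).le

end LimitCovariance

section CentralLimit

open Matrix Topology

variable {κ : ℝ} {q β : Fin 3 → ℝ}

theorem tendsto_weightedCharFun_condMass {σ : Type*} {L : Filter σ} {n : σ → ℕ}
    (hκ : κ ∈ Set.Ioo 0 1) (hn : Tendsto n L atTop) {l : ∀ s, Fin (n s) → Bool}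
    (hl : Tendsto (fun s => labelFreq (l s)) L (𝓝 κ)) {p b : σ → Fin 3 → ℝ}
    (hp : Tendsto p L (𝓝 q)) (hb : Tendsto b L (𝓝 β)) (t : Fin 3 → Fin 2 → ℝ) (θ : ℝ) :
    Tendsto (fun s => weightedCharFun (condMass (p s) (b s) (l s))
      (fun x => ∑ g, t g ⬝ᵥ configMoments (p s) (b s) (l s, x) g) θ) L
      (𝓝 (Complex.exp (-(θ ^ 2 * limitVariance κ q β t) / 2 : ℝ))) := by
  have hsize (g : Fin 3) := tendsto_blockSize_div_sq hn hl g
  have hN (g : Fin 3) : Tendsto (fun s => blockSize (l s) g) L atTop :=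
    tendsto_atTop_of_tendsto_div_sq hn (blockScale_pos hκ g) (hsize g)
  have hparam (g : Fin 3) : Tendsto (fun s => (p s g, b s g)) L (𝓝 (q g, β g)) :=
    (tendsto_pi_nhds.1 hp g).prodMk_nhds (tendsto_pi_nhds.1 hb g)
  have hNθ (g : Fin 3) : Tendsto (fun s => (blockSize (l s) g : ℝ) *
      (θ * (n s / blockSize (l s) g)) ^ 2) L (𝓝 (θ ^ 2 * (blockScale κ g)⁻¹)) := by
    refine ((tendsto_mul_div_sq (blockScale_pos hκ g).ne' (hsize g)).const_mul (θ ^ 2)).congr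
      fun s => ?_
    ring
  have hblock (g : Fin 3) := tendsto_weightedCharFun_pow
    ((continuous_pairWeight.tendsto _).comp (hparam g))
    (((continuous_pairStat (t g)).tendsto _).comp (hparam g))
    (fun s => sum_pairWeight (p s g) (b s g))
    (fun s => sum_pairWeight_mul_pairStat (p s g) (b s g) (t g)) (hN g) (hNθ g)
  have hexp : Complex.exp (-(θ ^ 2 * limitVariance κ q β t) / 2 : ℝ) =
      ∏ g : Fin 3, Complex.exp (-(θ ^ 2 * (blockScale κ g)⁻¹ *
        ∑ x, pairWeight (q g) (β g) x * pairStat (q g) (β g) (t g) x ^ 2) / 2 : ℝ) := by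
    simp only [← Complex.exp_sum, ← Complex.ofReal_sum, sum_pairWeight_mul_pairStat_sq,
      limitVariance, Finset.mul_sum, ← Finset.sum_neg_distrib, Finset.sum_div, mul_assoc]
  rw [hexp]
  refine (tendsto_finsetProd univ fun g _ => hblock g).congr' ?_
  filter_upwards [eventually_all.2 fun g => (hN g).eventually_ne_atTop 0] with s hs
  exact (weightedCharFun_condMass (p s) (b s) hs t θ).symm

variable {Ω : ℕ → Type*} [∀ i, MeasurableSpace (Ω i)] {P : ∀ i, Measure (Ω i)}
  {n : ℕ → ℕ} {p b : ℕ → Fin 3 → ℝ} {c : ∀ i, Ω i → Fin (n i) → Bool}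
  {A Y Y' : ∀ i, Ω i → Fin (n i) → Fin (n i) → Bool}

theorem tendstoInDistribution_scaledMoments [∀ i, IsProbabilityMeasure (P i)]
    (hκ : κ ∈ Set.Ioo 0 1) (hq : ∀ g, q g ∈ Set.Ioo 0 1) (hβ : ∀ g, β g ∈ Set.Ioo 0 1)
    (hn : Tendsto n atTop atTop) (hp : Tendsto p atTop (𝓝 q)) (hb : Tendsto b atTop (𝓝 β))
    (hp01 : ∀ i g, p i g ∈ Set.Icc 0 1) (hb01 : ∀ i g, b i g ∈ Set.Icc 0 1)
    (hmodel : ∀ i, IsObsSBM (P i) (n i) (fun x y => p i (blockOf x y))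
      (fun x y => b i (blockOf x y)) κ (c i) (A i) (Y i) (Y' i)) (t : Fin 3 → Fin 2 → ℝ) :
    TendstoInDistribution (fun i ω => ∑ g, t g ⬝ᵥ scaledMoments (p i g) (b i g)
      (inBlock (c i ω) g) (Y i ω) (Y' i ω)) atTop id P
      (gaussianReal 0 (limitVariance κ q β t).toNNReal) := by
  have hκ' := Set.Ioo_subset_Icc_self hκ
  simp only [← fun i => configMoments_configOf (hmodel i) (p i) (b i)]
  refine tendstoInDistribution_gaussianReal_of_weightedCharFun
    (f := fun i => configOf (c i) (A i) (Y i) (Y' i))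
    (m := fun i k => labelMass κ k.1 * condMass (p i) (b i) k.1 k.2)
    (Z := fun i k => ∑ g, t g ⬝ᵥ configMoments (p i) (b i) k g)
    (fun i k => mul_nonneg (labelMass_nonneg hκ' _) (condMass_nonneg (hp01 i) (hb01 i) _ _))
    (fun i => ?_) (fun i => measure_configOf_preimage_singleton (hmodel i)) fun θ => ?_
  · simp only [Fintype.sum_prod_type, ← Finset.mul_sum, sum_condMass, mul_one, sum_labelMass]
  · rw [Real.coe_toNNReal _ (limitVariance_nonneg hκ hq hβ t)]
    simp only [weightedCharFun_prod]
    refine tendsto_sum_mul_of_tendsto_comap (ξ := fun i => labelFreq) (a := κ) (C := 1)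
      (fun i => labelMass_nonneg hκ') (fun i => sum_labelMass κ (n i)) ?_ (fun i l => ?_) ?_
    · refine ((tendsto_const_nhds (x := κ * (1 - κ))).div_atTop
        (tendsto_natCast_atTop_atTop.comp hn)).congr' ?_
      filter_upwards [hn.eventually_ne_atTop 0] with i hi
      exact (sum_labelMass_mul_labelFreq_sub_sq κ hi).symm
    · exact (norm_weightedCharFun_le (condMass_nonneg (hp01 i) (hb01 i) l) _ θ).trans_eq
        (sum_condMass _ _ l)
    · exact tendsto_weightedCharFun_condMass hκ (hn.comp (tendsto_comap.mono_left inf_le_left))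
        (tendsto_comap.mono_left inf_le_right) (hp.comp (tendsto_comap.mono_left inf_le_left))
        (hb.comp (tendsto_comap.mono_left inf_le_left)) t θ

end CentralLimit

section JointCentralLimit

open Matrix Topology

lemma eventually_forall_mem_Icc_of_tendsto {σ ι : Type*} [Finite ι] {L : Filter σ}
    {p : σ → ι → ℝ} {q : ι → ℝ} (hp : Tendsto p L (𝓝 q)) (hq : ∀ g, q g ∈ Set.Ioo 0 1) :
    ∀ᶠ s in L, ∀ g, p s g ∈ Set.Icc 0 1 :=
  eventually_all.2 fun g => (tendsto_pi_nhds.1 hp g).eventually_mem (Icc_mem_nhds (hq g).1 (hq g).2)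

lemma continuous_meanMoments (j : Fin 2) :
    Continuous fun u : ℝ × ℝ => meanMoments u.1 u.2 j := by
  fin_cases j
  · exact (continuous_const.sub continuous_snd).mul continuous_fst
  · exact continuous_snd.mul ((continuous_const.sub continuous_snd).mul continuous_fst)

lemma sum_single_dotProduct_scaledMoments {n : ℕ} (p b : Fin 3 → ℝ)
    (cls : Fin 3 → Fin n → Fin n → Bool) (y y' : Fin n → Fin n → Bool) (g : Fin 3) (j : Fin 2) :
    ∑ h, (Pi.single g (Pi.single j 1) : Fin 3 → Fin 2 → ℝ) h ⬝ᵥ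
        scaledMoments (p h) (b h) (cls h) y y' =
      n * (empMoments (cls g) y y' j - meanMoments (p g) (b g) j) := by
  rw [Fintype.sum_eq_single g fun h hh => by rw [Pi.single_eq_of_ne hh, zero_dotProduct],
    Pi.single_eq_same, single_one_dotProduct]
  rfl

variable {κ : ℝ} {q β : Fin 3 → ℝ} {Ω : ℕ → Type*} [∀ n, MeasurableSpace (Ω n)]
  {P : ∀ n, Measure (Ω n)} {c : ∀ n, Ω n → Fin n → Bool} {A Y Y' : ∀ n, Ω n → Fin n → Fin n → Bool}
  {p b : ℕ → Fin 3 → ℝ}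

lemma exists_tendstoInDistribution_scaledMoments (hκ : κ ∈ Set.Ioo 0 1)
    (hq : ∀ g, q g ∈ Set.Ioo 0 1) (hβ : ∀ g, β g ∈ Set.Ioo 0 1)
    (hp : Tendsto p atTop (𝓝 q)) (hb : Tendsto b atTop (𝓝 β))
    (hmodel : ∀ᶠ n in atTop, IsObsSBM (P n) n (fun x y => p n (blockOf x y))
      (fun x y => b n (blockOf x y)) κ (c n) (A n) (Y n) (Y' n)) :
    ∃ n₀, ∃ _ : ∀ i, IsProbabilityMeasure (P (i + n₀)), ∀ t : Fin 3 → Fin 2 → ℝ,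
      TendstoInDistribution (fun i ω => ∑ g, t g ⬝ᵥ scaledMoments (p (i + n₀) g) (b (i + n₀) g)
        (inBlock (c (i + n₀) ω) g) (Y (i + n₀) ω) (Y' (i + n₀) ω)) atTop id (fun i => P (i + n₀))
        (gaussianReal 0 (limitVariance κ q β t).toNNReal) := by
  obtain ⟨n₀, hn₀⟩ := eventually_atTop.1 (hmodel.and
    ((eventually_forall_mem_Icc_of_tendsto hp hq).and (eventually_forall_mem_Icc_of_tendsto hb hβ)))
  have hn₀' (i : ℕ) := hn₀ (i + n₀) (Nat.le_add_left n₀ i)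
  have hshift := tendsto_add_atTop_nat n₀
  have hprob (i : ℕ) : IsProbabilityMeasure (P (i + n₀)) := (hn₀' i).1.isProb
  exact ⟨n₀, hprob, tendstoInDistribution_scaledMoments hκ hq hβ hshift (hp.comp hshift)
    (hb.comp hshift) (fun i => (hn₀' i).2.1) (fun i => (hn₀' i).2.2) fun i => (hn₀' i).1⟩

theorem statement_11_general (hκ : κ ∈ Set.Ioo 0 1)
    (hq : ∀ g, q g ∈ Set.Ioo 0 1) (hβ : ∀ g, β g ∈ Set.Ioo 0 1)
    (hp : Tendsto p atTop (𝓝 q)) (hb : Tendsto b atTop (𝓝 β))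
    (hmodel : ∀ᶠ n in atTop, IsObsSBM (P n) n (fun x y => p n (blockOf x y))
      (fun x y => b n (blockOf x y)) κ (c n) (A n) (Y n) (Y' n)) :
    (∀ g, (SigmaU ((1 - β g) * q g) (β g)).PosDef) ∧
    (∀ t : Fin 3 → Fin 2 → ℝ, t ≠ 0 → ∀ x : ℝ,
      Tendsto (fun n => (P n {ω | ∑ g, t g ⬝ᵥ scaledMoments (p n g) (b n g)
          (inBlock (c n ω) g) (Y n ω) (Y' n ω) ≤ x}).toReal) atTop
        (𝓝 (gaussianReal 0 (limitVariance κ q β t).toNNReal (Set.Iic x)).toReal)) ∧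
    ∀ g j, ∀ ε > 0, Tendsto (fun n => P n {ω | ε < |empMoments (inBlock (c n ω) g)
      (Y n ω) (Y' n ω) j - meanMoments (q g) (β g) j|}) atTop (𝓝 0) := by
  obtain ⟨n₀, _, hlim⟩ := exists_tendstoInDistribution_scaledMoments hκ hq hβ hp hb hmodel
  refine ⟨fun g => posDef_SigmaU (hq g) (hβ g), fun t ht x => ?_, fun g j ε hε => ?_⟩
  · have hv := (Real.toNNReal_pos.2 (limitVariance_pos hκ hq hβ ht)).ne'
    exact (ENNReal.tendsto_toReal (measure_ne_top _ _)).comp ((tendsto_add_atTop_iff_nat n₀).1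
      (tendsto_measure_le_of_tendstoInDistribution_gaussianReal hv (hlim t) x))
  · have hlim' := hlim (Pi.single g (Pi.single j 1))
    simp only [sum_single_dotProduct_scaledMoments] at hlim'
    have hmean : Tendsto (fun i => meanMoments (p i g) (b i g) j) atTop
        (𝓝 (meanMoments (q g) (β g) j)) :=
      ((continuous_meanMoments j).tendsto _).comp
        ((tendsto_pi_nhds.1 hp g).prodMk_nhds (tendsto_pi_nhds.1 hb g))
    have hshift := tendsto_add_atTop_nat n₀
    exact (tendsto_add_atTop_iff_nat n₀).1 (tendsto_measure_lt_abs_sub_of_tendstoInDistribution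
      (tendsto_natCast_atTop_atTop.comp hshift) (hmean.comp hshift) hlim' hε)

end JointCentralLimit

section LocalParameters

open Matrix Topology

/-- The coordinates of a vector in `ℝ⁶` grouped into the three blocks of two moments. -/
def blockCoords (t : Fin 6 → ℝ) : Fin 3 → Fin 2 → ℝ :=
  ![![t 0, t 1], ![t 2, t 3], ![t 4, t 5]]

lemma blockCoords_ne_zero {t : Fin 6 → ℝ} (ht : t ≠ 0) : blockCoords t ≠ 0 := fun h => by
  have hcoord := congrFun₂ h
  refine ht (funext fun k => ?_)
  fin_cases k
  exacts [hcoord 0 0, hcoord 0 1, hcoord 1 0, hcoord 1 1, hcoord 2 0, hcoord 2 1]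

lemma sum_mul_obsVec {n : ℕ} (q β μ₁ μ₂ γ₁ γ₂ : ℝ) (l : Fin n → Bool)
    (y y' : Fin n → Fin n → Bool) (t : Fin 6 → ℝ) :
    ∑ k, t k * obsVec q β μ₁ μ₂ γ₁ γ₂ l y y' k =
      ∑ g, blockCoords t g ⬝ᵥ scaledMoments (![q + μ₁ / √n, q + μ₂ / √n, q] g)
        (![β - γ₁ / √n, β - γ₂ / √n, β] g) (inBlock l g) y y' := by
  have hret (d : ℝ) : 1 - β + d = 1 - (β - d) := by ring
  simp only [obsVec, hret, Fin.sum_univ_six, cons_val_zero, cons_val_one, Matrix.cons_val,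
    dotProduct, blockCoords, cons_val_fin_one, scaledMoments, empMoments, meanMoments,
    Pi.sub_apply, Pi.smul_apply, smul_eq_mul, Fin.sum_univ_two, Fin.sum_univ_three, inBlock_zero,
    inBlock_one, inBlock_two, add_assoc]

lemma quadForm6_Sigma6 (κ q β : ℝ) (t : Fin 6 → ℝ) :
    quadForm6 (Sigma6 κ ((1 - β) * q) β) t =
      limitVariance κ (fun _ => q) (fun _ => β) (blockCoords t) := by
  simp only [quadForm6, Sigma6, SigmaUfun, mul_ite, mul_zero, ite_mul, zero_mul, Fin.sum_univ_six,
    Fin.coe_ofNat_eq_mod, Nat.reduceMod, Nat.reduceDiv, OfNat.ofNat_ne_zero, ↓reduceIte,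
    one_ne_zero, zero_ne_one, add_zero, OfNat.zero_ne_ofNat, zero_add, OfNat.one_ne_ofNat,
    OfNat.ofNat_ne_one, limitVariance, dotProduct, blockCoords, cons_val_fin_one, mulVec, SigmaU,
    of_apply, Fin.sum_univ_two, cons_val_zero, cons_val_one, Fin.sum_univ_three, Matrix.cons_val,
    cons_val']
  ring

lemma tendsto_vecCons_add_div_sqrt (x d₁ d₂ : ℝ) :
    Tendsto (fun n : ℕ => ![x + d₁ / √n, x + d₂ / √n, x]) atTop (𝓝 fun _ => x) := by
  have hdiv (d : ℝ) : Tendsto (fun n : ℕ => x + d / √n) atTop (𝓝 x) := by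
    simpa using tendsto_const_nhds.add
      (tendsto_const_nhds.div_atTop (Real.tendsto_sqrt_atTop.comp tendsto_natCast_atTop_atTop))
  refine tendsto_pi_nhds.2 fun g => ?_
  fin_cases g
  exacts [hdiv d₁, hdiv d₂, tendsto_const_nhds]

lemma tendsto_vecCons_sub_div_sqrt (x d₁ d₂ : ℝ) :
    Tendsto (fun n : ℕ => ![x - d₁ / √n, x - d₂ / √n, x]) atTop (𝓝 fun _ => x) := by
  simpa only [neg_div, ← sub_eq_add_neg] using tendsto_vecCons_add_div_sqrt x (-d₁) (-d₂)

end LocalParameters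

theorem statement_11
    (κ q β μ₁ μ₂ γ₁ γ₂ : ℝ)
    (hκ0 : 0 < κ) (hκ1 : κ < 1) (hq0 : 0 < q) (hq1 : q < 1)
    (hβ0 : 0 < β) (hβ1 : β < 1)
    (Ω : ℕ → Type) [mΩ : ∀ n, MeasurableSpace (Ω n)] (P : ∀ n, Measure (Ω n))
    (c : ∀ n, Ω n → Fin n → Bool)
    (A Y Y' : ∀ n, Ω n → Fin n → Fin n → Bool)
    (hmodel : ∀ᶠ n : ℕ in atTop,
      IsObsSBM (P n) n
        (sbmB (q + μ₁ / Real.sqrt n) (q + μ₂ / Real.sqrt n) q)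
        (sbmB (β - γ₁ / Real.sqrt n) (β - γ₂ / Real.sqrt n) β)
        κ (c n) (A n) (Y n) (Y' n)) :
    -- Σ_u is strictly positive definite
    (SigmaU ((1 - β) * q) β).PosDef ∧
    -- Cramér–Wold: every nonzero linear combination of the centered, scaled
    -- moment vector converges in distribution to the centred Gaussian with
    -- the corresponding variance
    (∀ t : Fin 6 → ℝ, t ≠ 0 → ∀ x : ℝ,
      Tendsto (fun n =>
          (P n {ω | ∑ k, t k *
              obsVec q β μ₁ μ₂ γ₁ γ₂ (c n ω) (Y n ω) (Y' n ω) k ≤ x}).toReal)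
        atTop
        (nhds ((gaussianReal 0
            (Real.toNNReal (quadForm6 (Sigma6 κ ((1 - β) * q) β) t))
            (Set.Iic x)).toReal))) ∧
    -- consistency of the six empirical moments
    (∀ ε > (0:ℝ),
      Tendsto (fun n => P n {ω |
          ε < |u1hat (within1 (c n ω)) (Y n ω) - (1 - β) * q|}) atTop (nhds 0) ∧
      Tendsto (fun n => P n {ω |
          ε < |u2hat (within1 (c n ω)) (Y n ω) (Y' n ω) - β * ((1 - β) * q)|})
        atTop (nhds 0) ∧
      Tendsto (fun n => P n {ω |
          ε < |u1hat (within2 (c n ω)) (Y n ω) - (1 - β) * q|}) atTop (nhds 0) ∧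
      Tendsto (fun n => P n {ω |
          ε < |u2hat (within2 (c n ω)) (Y n ω) (Y' n ω) - β * ((1 - β) * q)|})
        atTop (nhds 0) ∧
      Tendsto (fun n => P n {ω |
          ε < |u1hat (between (c n ω)) (Y n ω) - (1 - β) * q|}) atTop (nhds 0) ∧
      Tendsto (fun n => P n {ω |
          ε < |u2hat (between (c n ω)) (Y n ω) (Y' n ω) - β * ((1 - β) * q)|})
        atTop (nhds 0)) := by
  simp only [sbmB_eq_vecCons_blockOf] at hmodel
  obtain ⟨hpos, hclt, hcons⟩ := statement_11_general ⟨hκ0, hκ1⟩ (fun _ => ⟨hq0, hq1⟩)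
    (fun _ => ⟨hβ0, hβ1⟩) (tendsto_vecCons_add_div_sqrt q μ₁ μ₂)
    (tendsto_vecCons_sub_div_sqrt β γ₁ γ₂) hmodel
  refine ⟨hpos 0, fun t ht x => ?_, fun ε hε => ?_⟩
  · simpa only [sum_mul_obsVec, quadForm6_Sigma6] using hclt _ (blockCoords_ne_zero ht) x
  · simp only [← inBlock_zero, ← inBlock_one, ← inBlock_two]
    exact ⟨hcons 0 0 ε hε, hcons 0 1 ε hε, hcons 1 0 ε hε, hcons 1 1 ε hε, hcons 2 0 ε hε,
      hcons 2 1 ε hε⟩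

end
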